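/- Let n ≥ 1, let x ∈ (0,1), and let ρ₁, ρ₂ be density matrices (n×n complex positive semidefinite matrices of trace 1), and set ρ_Av := x·ρ₁ + (1−x)·ρ₂. Then h(x)·(1/2)·‖ρ₁ − ρ₂‖₁ ≥ S(ρ_Av) − x·S(ρ₁) − (1−x)·S(ρ₂) ≥ (1/2)·x·(1−x)·‖ρ₁ − ρ₂‖₁², where h(x) = −x·log x − (1−x)·log(1−x) is the binary entropy. -/

import Mathlib

open Matrix ComplexOrder

/-- Apply a real function to a Hermitian matrix via the spectral decomposition
`A = U D U*`: the result is `U (f(D)) U*` where `f` acts on the diagonal. -/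
noncomputable def mfun {m : Type*} [Fintype m] [DecidableEq m]
    (f : ℝ → ℝ) (A : Matrix m m ℂ) : Matrix m m ℂ :=
  if hA : A.IsHermitian then hA.cfc f else 0

/-- Matrix logarithm via spectral decomposition, with the convention `log 0 = 0`
(note `Real.log 0 = 0`). -/
noncomputable def matLog {m : Type*} [Fintype m] [DecidableEq m]
    (A : Matrix m m ℂ) : Matrix m m ℂ :=
  mfun Real.log A

/-- The positive semidefinite square root of a positive semidefinite matrix,
via spectral decomposition. -/
noncomputable def matSqrt {m : Type*} [Fintype m] [DecidableEq m]
    (A : Matrix m m ℂ) : Matrix m m ℂ :=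
  mfun Real.sqrt A

/-- Real power of a (positive semidefinite / positive definite) matrix via spectral
decomposition. -/
noncomputable def matRpow {m : Type*} [Fintype m] [DecidableEq m]
    (t : ℝ) (A : Matrix m m ℂ) : Matrix m m ℂ :=
  mfun (fun u => u ^ t) A

/-- The von Neumann entropy `S(ρ) = -Tr(ρ log ρ)`. -/
noncomputable def vnEntropy {m : Type*} [Fintype m] [DecidableEq m]
    (ρ : Matrix m m ℂ) : ℝ :=
  -(Matrix.trace (ρ * matLog ρ)).re

/-- The quantum relative entropy `H(ρ, γ) = Tr(ρ (log ρ - log γ))`. -/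
noncomputable def relEntropy {m : Type*} [Fintype m] [DecidableEq m]
    (ρ γ : Matrix m m ℂ) : ℝ :=
  (Matrix.trace (ρ * (matLog ρ - matLog γ))).re

/-- The trace norm of a Hermitian matrix: the sum of the absolute values of its
eigenvalues. -/
noncomputable def traceNorm {m : Type*} [Fintype m] [DecidableEq m]
    (A : Matrix m m ℂ) : ℝ :=
  if hA : A.IsHermitian then ∑ i, |hA.eigenvalues i| else 0

/-- A density matrix: positive semidefinite with trace 1. -/
def IsDensity {m : Type*} [Fintype m] [DecidableEq m] (ρ : Matrix m m ℂ) : Prop :=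
  ρ.PosSemidef ∧ Matrix.trace ρ = 1

/-- The binary entropy `h(x) = -x log x - (1-x) log (1-x)`. -/
noncomputable def binEntropy (x : ℝ) : ℝ :=
  -(x * Real.log x) - (1 - x) * Real.log (1 - x)

/-- The Renyi relative entropy `H_a(ρ,γ) = (a-1)⁻¹ log Tr(ρ^a γ^(1-a))`. -/
noncomputable def renyiRel {m : Type*} [Fintype m] [DecidableEq m]
    (a : ℝ) (ρ γ : Matrix m m ℂ) : ℝ :=
  (a - 1)⁻¹ * Real.log (Matrix.trace (matRpow a ρ * matRpow (1 - a) γ)).re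

/-- The sandwiched Renyi relative entropy
`H̃_a(ρ,γ) = (a-1)⁻¹ log Tr((γ^((1-a)/(2a)) ρ γ^((1-a)/(2a)))^a)`. -/
noncomputable def sandRenyiRel {m : Type*} [Fintype m] [DecidableEq m]
    (a : ℝ) (ρ γ : Matrix m m ℂ) : ℝ :=
  (a - 1)⁻¹ * Real.log
    (Matrix.trace (matRpow a
      (matRpow ((1 - a) / (2 * a)) γ * ρ * matRpow ((1 - a) / (2 * a)) γ))).re

/-!
Let `γ = x ρ₁ + (1 - x) ρ₂`. The concavity gap is `x H(ρ₁, γ) + (1 - x) H(ρ₂, γ)`, so the lower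
bound is Pinsker's inequality `2 H(A, B) ≥ ‖A - B‖₁²` applied twice. To get Pinsker's inequality,
write traces in the eigenbases of `A` and `B`, bound each pair of eigenvalues by the scalar
inequality `3 (a - b)² ≤ 2 (a + 2 b) (a log a - a log b - a + b)`, and sum with Cauchy-Schwarz.

For the upper bound, write `γ_t = t ρ₁ + (1 - t) ρ₂`; then `t ↦ S(γ_t) - h(t) ‖ρ₁ - ρ₂‖₁ / 2` is
convex. Klein's inequality makes `-Tr((ρ₁ - ρ₂) log γ_t)` a supergradient of the entropy along the
segment, hence its derivative. For `s ≤ t`, comparing `γ_s` with multiples of `γ_t` and using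
operator monotonicity of the logarithm gives
`log ((1 - t) / (1 - s)) ≤ log γ_t - log γ_s ≤ log (t / s)`, so the slope drops by at most
`‖ρ₁ - ρ₂‖₁ / 2` times the drop of the slope of `h`.

Since `log 0 = 0`, relative entropy is only meaningful against an invertible second argument; adding
`ε` times the identity to both states and letting `ε → 0` reduces to invertible states.
-/

open scoped MatrixOrder Matrix.Norms.L2Operator Topology
open Set Filter InformationTheory AffineMap

lemma three_mul_sub_one_sq_le_klFun {u : ℝ} (hu : 0 ≤ u) :
    3 * (u - 1) ^ 2 ≤ 2 * (u + 2) * klFun u := by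
  let F : ℝ → ℝ := fun u ↦ 2 * (u + 2) * klFun u - 3 * (u - 1) ^ 2
  let F' : ℝ → ℝ := fun u ↦ 2 * klFun u + 2 * (u + 2) * Real.log u - 6 * (u - 1)
  have hF' : ∀ v > 0, HasDerivAt F (F' v) v := fun v hv ↦ by
    refine (((((hasDerivAt_id v).add_const 2).const_mul 2).mul (hasDerivAt_klFun hv.ne')).sub
      ((((hasDerivAt_id v).sub_const 1).pow 2).const_mul 3)).congr_deriv ?_
    simp only [F', id_eq]
    ring
  have hF'' : ∀ v > 0, HasDerivAt F' (4 * (Real.log v - (1 - v⁻¹))) v := fun v hv ↦ by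
    refine ((((hasDerivAt_klFun hv.ne').const_mul 2).add ((((hasDerivAt_id v).add_const 2).const_mul
      2).mul (Real.hasDerivAt_log hv.ne'))).sub
      (((hasDerivAt_id v).sub_const 1).const_mul 6)).congr_deriv ?_
    simp only [id_eq]
    field_simp
    ring
  have hconvex : ConvexOn ℝ (Ici 0) F := by
    refine convexOn_of_hasDerivWithinAt2_nonneg (f' := F')
      (f'' := fun v ↦ 4 * (Real.log v - (1 - v⁻¹))) (convex_Ici 0) (by fun_prop)
      ?_ ?_ ?_ <;> simp only [interior_Ici, mem_Ioi]
    · exact fun v hv ↦ (hF' v hv).hasDerivWithinAt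
    · exact fun v hv ↦ (hF'' v hv).hasDerivWithinAt
    · exact fun v hv ↦ mul_nonneg zero_le_four (sub_nonneg.2 (Real.one_sub_inv_le_log_of_pos hv))
  have hmin : IsMinOn F (Ici 0) 1 := by
    refine hconvex.isMinOn_of_rightDeriv_eq_zero (by simp) ?_
    rw [(hF' 1 one_pos).hasDerivWithinAt.derivWithin (uniqueDiffWithinAt_Ioi 1)]
    simp [F', klFun_one]
  have hF : F 1 ≤ F u := hmin hu
  simp only [F, klFun_one] at hF
  linarith

lemma three_mul_sub_sq_le_mul_log {a b : ℝ} (ha : 0 ≤ a) (hb : 0 < b) :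
    3 * (a - b) ^ 2 ≤ 2 * (a + 2 * b) * (a * Real.log a - a * Real.log b - a + b) := by
  have hscale : b * klFun (a / b) = a * Real.log a - a * Real.log b - a + b := by
    rcases ha.eq_or_lt with rfl | ha
    · simp [klFun_zero]
    · rw [klFun_apply, Real.log_div ha.ne' hb.ne']
      field_simp
      ring
  calc 3 * (a - b) ^ 2 = b ^ 2 * (3 * (a / b - 1) ^ 2) := by field_simp
    _ ≤ b ^ 2 * (2 * (a / b + 2) * klFun (a / b)) :=
      mul_le_mul_of_nonneg_left (three_mul_sub_one_sq_le_klFun (by positivity)) (sq_nonneg b)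
    _ = 2 * (a + 2 * b) * (b * klFun (a / b)) := by field_simp
    _ = _ := by rw [hscale]

lemma hasDerivAt_of_supergradient {f p : ℝ → ℝ} {t : ℝ} (hp : ContinuousAt p t)
    (hf : ∀ᶠ s in 𝓝 t, f s - f t ≤ p t * (s - t) ∧ f t - f s ≤ p s * (t - s)) :
    HasDerivAt f (p t) t := by
  rw [hasDerivAt_iff_isLittleO, Asymptotics.isLittleO_iff]
  intro c hc
  filter_upwards [hf, hp.eventually (Metric.closedBall_mem_nhds (p t) hc)] with s hs hps
  rw [Real.dist_eq] at hps
  calc ‖f s - f t - (s - t) • p t‖ = -(f s - f t - (s - t) * p t) := by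
        rw [Real.norm_eq_abs, smul_eq_mul, abs_of_nonpos]
        linarith [hs.1]
    _ ≤ -((p s - p t) * (s - t)) := by linarith [hs.2]
    _ ≤ |p s - p t| * |s - t| := by rw [← abs_mul]; exact neg_le_abs _
    _ ≤ c * ‖s - t‖ := by rw [Real.norm_eq_abs]; gcongr

lemma binEntropy_eq_real_binEntropy (x : ℝ) : binEntropy x = Real.binEntropy x := by
  simp only [binEntropy, Real.binEntropy_eq_negMulLog_add_negMulLog_one_sub, Real.negMulLog]
  ring

section Spectral

variable {m : Type*} [Fintype m] {A B : Matrix m m ℂ}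

lemma re_trace_mul_nonneg (hA : A.PosSemidef) (hB : B.PosSemidef) :
    0 ≤ (trace (A * B)).re := by
  classical
  obtain ⟨C, rfl⟩ := CStarAlgebra.nonneg_iff_eq_star_mul_self.1 (nonneg_iff_posSemidef.2 hA)
  rw [mul_assoc, trace_mul_comm]
  exact (Complex.le_def.1 (hB.mul_mul_conjTranspose_same C).trace_nonneg).1

variable [DecidableEq m]

lemma mfun_eq_cfc (f : ℝ → ℝ) (A : Matrix m m ℂ) : mfun f A = cfc f A := by
  by_cases hA : A.IsHermitian
  · rw [mfun, dif_pos hA, hA.cfc_eq]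
  · rw [mfun, dif_neg hA]
    exact (cfc_apply_of_not_predicate (R := ℝ) (p := IsSelfAdjoint) A hA).symm

lemma matLog_eq_cfc (A : Matrix m m ℂ) : matLog A = cfc Real.log A :=
  mfun_eq_cfc Real.log A

lemma continuousOn_real_spectrum (f : ℝ → ℝ) (A : Matrix m m ℂ) :
    ContinuousOn f (spectrum ℝ A) :=
  A.finite_real_spectrum.continuousOn f

lemma mul_cfc_eq_cfc (hA : A.IsHermitian) (f : ℝ → ℝ) :
    A * cfc f A = cfc (fun t ↦ t * f t) A := by
  rw [cfc_mul (fun t ↦ t) f A (by fun_prop) (continuousOn_real_spectrum f A),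
    cfc_id' ℝ A hA.isSelfAdjoint]

lemma vnEntropy_eq_trace_cfc (hA : A.IsHermitian) :
    vnEntropy A = (trace (cfc Real.negMulLog A)).re := by
  rw [vnEntropy, matLog_eq_cfc, mul_cfc_eq_cfc hA, ← Complex.neg_re, ← trace_neg, ← cfc_neg]
  simp only [Real.negMulLog_eq_neg]

lemma continuousOn_vnEntropy :
    ContinuousOn (vnEntropy (m := m)) {A | A.IsHermitian} := by
  have hcfc : ContinuousOn (fun A : Matrix m m ℂ ↦ cfc Real.negMulLog A) {A | A.IsHermitian} :=
    continuousOn_id.cfc_of_mem_nhdsSet (s := univ) _ univ_mem (fun A hA ↦ hA.isSelfAdjoint)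
      Real.continuous_negMulLog.continuousOn
  have htrace : Continuous fun M : Matrix m m ℂ ↦ (trace M).re := by fun_prop
  exact (htrace.comp_continuousOn hcfc).congr fun A hA ↦ vnEntropy_eq_trace_cfc hA

lemma trace_cfc (hA : A.IsHermitian) (f : ℝ → ℝ) :
    trace (cfc f A) = ∑ i, (f (hA.eigenvalues i) : ℂ) := by
  rw [hA.cfc_eq, IsHermitian.cfc, Unitary.conjStarAlgAut_apply, trace_mul_cycle,
    Unitary.coe_star_mul_self, one_mul, trace_diagonal]
  rfl

lemma traceNorm_eq_trace_cfc_abs (hA : A.IsHermitian) :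
    (traceNorm A : ℂ) = trace (cfc (fun t : ℝ ↦ |t|) A) := by
  rw [traceNorm, dif_pos hA, trace_cfc hA, Complex.ofReal_sum]

lemma traceNorm_nonneg (A : Matrix m m ℂ) : 0 ≤ traceNorm A := by
  rw [traceNorm]
  split_ifs
  · positivity
  · rfl

lemma traceNorm_smul (hA : A.IsHermitian) (c : ℝ) :
    traceNorm (c • A) = |c| * traceNorm A := by
  have hcA : (c • A).IsHermitian := hA.smul (IsSelfAdjoint.all c)
  rw [← Complex.ofReal_inj, traceNorm_eq_trace_cfc_abs hcA,
    ← cfc_comp_smul c (fun t : ℝ ↦ |t|) A (by fun_prop) hA.isSelfAdjoint, trace_cfc hA,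
    traceNorm, dif_pos hA, Finset.mul_sum]
  simp [abs_mul]

lemma exists_unitary_trace_mul_eq_traceNorm (hA : A.IsHermitian) :
    ∃ X ∈ unitary (Matrix m m ℂ), trace (A * X) = traceNorm A := by
  -- The value `1` rather than `0` at `0` makes `sgn(A)` unitary when `A` is singular.
  let sgn : ℝ → ℝ := fun t ↦ if 0 ≤ t then 1 else -1
  have hsgn_mul_self : ∀ t, sgn t * sgn t = 1 := fun t ↦ by
    simp only [sgn]; split_ifs <;> norm_num
  have hmul_sgn : ∀ t, t * sgn t = |t| := fun t ↦ by
    simp only [sgn]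
    split_ifs with ht
    · rw [mul_one, abs_of_nonneg ht]
    · rw [mul_neg_one, abs_of_neg (not_le.1 ht)]
  have hmul_self : cfc sgn A * cfc sgn A = 1 := by
    rw [← cfc_mul sgn sgn A (continuousOn_real_spectrum sgn A) (continuousOn_real_spectrum sgn A)]
    simp only [hsgn_mul_self]
    exact cfc_const_one ℝ A hA.isSelfAdjoint
  have hstar : star (cfc sgn A) = cfc sgn A := (cfc_predicate sgn A).star_eq
  refine ⟨cfc sgn A, ?_, ?_⟩
  · rw [Unitary.mem_iff, hstar]
    exact ⟨hmul_self, hmul_self⟩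
  · rw [mul_cfc_eq_cfc hA, traceNorm_eq_trace_cfc_abs hA]
    simp only [hmul_sgn]

/-- The matrix of `Z` between the eigenbases `|aᵢ⟩` of `A` and `|bⱼ⟩` of `B`, with entries
`⟨aᵢ|Z|bⱼ⟩`; it turns traces of products of functions of `A` and `B` into sums over pairs of
eigenvalues. -/
noncomputable def eigenCoeff (hA : A.IsHermitian) (hB : B.IsHermitian) (Z : Matrix m m ℂ) :
    Matrix m m ℂ :=
  star (hA.eigenvectorUnitary : Matrix m m ℂ) * Z * hB.eigenvectorUnitary

lemma trace_diagonal_mul_mul_diagonal_mul (d e : m → ℂ) (P Q : Matrix m m ℂ) :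
    trace (diagonal d * P * diagonal e * Qᴴ) =
      ∑ p : m × m, d p.1 * e p.2 * (P p.1 p.2 * star (Q p.1 p.2)) := by
  rw [Fintype.sum_prod_type, trace]
  refine Finset.sum_congr rfl fun i _ ↦ ?_
  rw [diag_apply, mul_apply]
  refine Finset.sum_congr rfl fun j _ ↦ ?_
  rw [mul_diagonal, diagonal_mul, conjTranspose_apply]
  ring

lemma trace_cfc_mul_mul_cfc_mul (hA : A.IsHermitian) (hB : B.IsHermitian) (f g : ℝ → ℝ)
    (Z Z' : Matrix m m ℂ) :
    trace (cfc f A * Z * cfc g B * Z'ᴴ) =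
      ∑ p : m × m, (f (hA.eigenvalues p.1) : ℂ) * g (hB.eigenvalues p.2) *
        (eigenCoeff hA hB Z p.1 p.2 * star (eigenCoeff hA hB Z' p.1 p.2)) := by
  refine Eq.trans ?_ (trace_diagonal_mul_mul_diagonal_mul (fun i ↦ (f (hA.eigenvalues i) : ℂ))
    (fun j ↦ (g (hB.eigenvalues j) : ℂ)) (eigenCoeff hA hB Z) (eigenCoeff hA hB Z'))
  rw [hA.cfc_eq, hB.cfc_eq, IsHermitian.cfc,
    IsHermitian.cfc, Unitary.conjStarAlgAut_apply, Unitary.conjStarAlgAut_apply]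
  simp only [eigenCoeff, star_eq_conjTranspose, conjTranspose_mul, conjTranspose_conjTranspose,
    Matrix.mul_assoc]
  rw [trace_mul_comm]
  simp only [Matrix.mul_assoc]
  rfl

lemma re_trace_cfc_mul_mul_cfc_mul_conjTranspose (hA : A.IsHermitian) (hB : B.IsHermitian)
    (f g : ℝ → ℝ) (Z : Matrix m m ℂ) :
    (trace (cfc f A * Z * cfc g B * Zᴴ)).re =
      ∑ p : m × m, ‖eigenCoeff hA hB Z p.1 p.2‖ ^ 2 *
        (f (hA.eigenvalues p.1) * g (hB.eigenvalues p.2)) := by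
  rw [trace_cfc_mul_mul_cfc_mul hA hB, Complex.re_sum]
  refine Finset.sum_congr rfl fun p _ ↦ ?_
  rw [Complex.star_def, Complex.mul_conj, Complex.normSq_eq_norm_sq, ← Complex.ofReal_mul,
    ← Complex.ofReal_mul, Complex.ofReal_re, mul_comm]

lemma trace_sub_mul_eq_sum (hA : A.IsHermitian) (hB : B.IsHermitian) (X : Matrix m m ℂ) :
    trace ((A - B) * X) =
      ∑ p : m × m, ((hA.eigenvalues p.1 - hB.eigenvalues p.2 : ℝ) : ℂ) *
        (eigenCoeff hA hB X p.1 p.2 * star (eigenCoeff hA hB 1 p.1 p.2)) := by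
  have hAX := trace_cfc_mul_mul_cfc_mul hA hB (fun t ↦ t) (fun _ ↦ 1) X 1
  have hXB := trace_cfc_mul_mul_cfc_mul hA hB (fun _ ↦ 1) (fun t ↦ t) X 1
  rw [cfc_id' ℝ A hA.isSelfAdjoint, cfc_const_one ℝ B hB.isSelfAdjoint] at hAX
  rw [cfc_id' ℝ B hB.isSelfAdjoint, cfc_const_one ℝ A hA.isSelfAdjoint] at hXB
  simp only [conjTranspose_one, mul_one, one_mul, Complex.ofReal_one] at hAX hXB
  rw [sub_mul, trace_sub, trace_mul_comm B, hAX, hXB, ← Finset.sum_sub_distrib]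
  simp only [Complex.ofReal_sub, sub_mul]

lemma sum_norm_sq_eigenCoeff_mul_eigenvalues (hA : A.IsHermitian) (hB : B.IsHermitian)
    {X : Matrix m m ℂ} (hX : X ∈ unitary (Matrix m m ℂ)) (α β : ℝ) :
    ∑ p : m × m, ‖eigenCoeff hA hB X p.1 p.2‖ ^ 2 *
      (α * hA.eigenvalues p.1 + β * hB.eigenvalues p.2) =
        α * (trace A).re + β * (trace B).re := by
  have hsumA := re_trace_cfc_mul_mul_cfc_mul_conjTranspose hA hB (fun t ↦ t) (fun _ ↦ 1) X
  have hsumB := re_trace_cfc_mul_mul_cfc_mul_conjTranspose hA hB (fun _ ↦ 1) (fun t ↦ t) X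
  rw [cfc_id' ℝ A hA.isSelfAdjoint, cfc_const_one ℝ B hB.isSelfAdjoint, mul_one, mul_assoc,
    ← star_eq_conjTranspose, Unitary.mul_star_self_of_mem hX, mul_one] at hsumA
  rw [cfc_id' ℝ B hB.isSelfAdjoint, cfc_const_one ℝ A hA.isSelfAdjoint, one_mul,
    trace_mul_cycle, ← star_eq_conjTranspose, Unitary.star_mul_self_of_mem hX, one_mul] at hsumB
  rw [hsumA, hsumB, Finset.mul_sum, Finset.mul_sum, ← Finset.sum_add_distrib]
  exact Finset.sum_congr rfl fun p _ ↦ by ring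

lemma relEntropy_sub_trace_add_trace_eq_sum (hA : A.IsHermitian) (hB : B.IsHermitian) :
    relEntropy A B - (trace A).re + (trace B).re =
      ∑ p : m × m, ‖eigenCoeff hA hB 1 p.1 p.2‖ ^ 2 *
        (hA.eigenvalues p.1 * Real.log (hA.eigenvalues p.1)
          - hA.eigenvalues p.1 * Real.log (hB.eigenvalues p.2)
          - hA.eigenvalues p.1 + hB.eigenvalues p.2) := by
  have hAA := re_trace_cfc_mul_mul_cfc_mul_conjTranspose hA hB
    (fun t ↦ t * Real.log t) (fun _ ↦ 1) 1
  have hAB := re_trace_cfc_mul_mul_cfc_mul_conjTranspose hA hB (fun t ↦ t) Real.log 1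
  have htr := sum_norm_sq_eigenCoeff_mul_eigenvalues hA hB (one_mem (unitary _)) (-1) 1
  rw [cfc_const_one ℝ B hB.isSelfAdjoint, ← mul_cfc_eq_cfc hA] at hAA
  rw [cfc_id' ℝ A hA.isSelfAdjoint] at hAB
  simp only [conjTranspose_one, mul_one] at hAA hAB
  calc relEntropy A B - (trace A).re + (trace B).re
      = (trace (A * cfc Real.log A)).re - (trace (A * cfc Real.log B)).re
          + (-1 * (trace A).re + 1 * (trace B).re) := by
        rw [relEntropy, matLog_eq_cfc, matLog_eq_cfc, mul_sub, trace_sub, Complex.sub_re]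
        ring
    _ = _ := by
        rw [hAA, hAB, ← htr, ← Finset.sum_sub_distrib, ← Finset.sum_add_distrib]
        exact Finset.sum_congr rfl fun p _ ↦ by ring

lemma klein_inequality (hA : A.PosSemidef) (hB : B.PosDef) :
    (trace A).re - (trace B).re ≤ relEntropy A B := by
  have hsum : 0 ≤ relEntropy A B - (trace A).re + (trace B).re := by
    rw [relEntropy_sub_trace_add_trace_eq_sum hA.isHermitian hB.isHermitian]
    refine Finset.sum_nonneg fun p _ ↦ mul_nonneg (sq_nonneg _) ?_
    have hb := hB.eigenvalues_pos p.2
    exact nonneg_of_mul_nonneg_right ((by positivity : (0 : ℝ) ≤ _).trans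
      (three_mul_sub_sq_le_mul_log (hA.eigenvalues_nonneg p.1) hb))
        (by linarith [hA.eigenvalues_nonneg p.1])
  linarith

lemma exists_unitary_traceNorm_sub_sq_le (hA : A.IsHermitian) (hB : B.IsHermitian)
    {κ w : m × m → ℝ} (hκ : ∀ p, 0 ≤ κ p) (hw : ∀ p, 0 ≤ w p)
    (hκw : ∀ p, (hA.eigenvalues p.1 - hB.eigenvalues p.2) ^ 2 ≤ κ p * w p) :
    ∃ X ∈ unitary (Matrix m m ℂ), traceNorm (A - B) ^ 2 ≤
      (∑ p, ‖eigenCoeff hA hB 1 p.1 p.2‖ ^ 2 * κ p) *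
        ∑ p, ‖eigenCoeff hA hB X p.1 p.2‖ ^ 2 * w p := by
  obtain ⟨X, hX, hXT⟩ := exists_unitary_trace_mul_eq_traceNorm (hA.sub hB)
  refine ⟨X, hX, ?_⟩
  have hT : traceNorm (A - B) ≤ ∑ p : m × m, |hA.eigenvalues p.1 - hB.eigenvalues p.2| *
      (‖eigenCoeff hA hB X p.1 p.2‖ * ‖eigenCoeff hA hB 1 p.1 p.2‖) := by
    calc traceNorm (A - B) = ‖trace ((A - B) * X)‖ := by
          rw [hXT, Complex.norm_real, Real.norm_of_nonneg (traceNorm_nonneg _)]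
      _ ≤ _ := by
          rw [trace_sub_mul_eq_sum hA hB]
          refine (norm_sum_le _ _).trans_eq (Finset.sum_congr rfl fun p _ ↦ ?_)
          rw [norm_mul, norm_mul, norm_star, Complex.norm_real, Real.norm_eq_abs]
  refine (pow_le_pow_left₀ (traceNorm_nonneg _) hT 2).trans
    (Finset.sum_sq_le_sum_mul_sum_of_sq_le_mul _
      (fun p _ ↦ mul_nonneg (sq_nonneg _) (hκ p))
      (fun p _ ↦ mul_nonneg (sq_nonneg _) (hw p)) fun p _ ↦ ?_)
  rw [mul_pow, sq_abs]
  linarith [mul_le_mul_of_nonneg_left (hκw p)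
    (sq_nonneg (‖eigenCoeff hA hB X p.1 p.2‖ * ‖eigenCoeff hA hB 1 p.1 p.2‖))]

lemma pinsker_inequality (hA : A.PosSemidef) (hB : B.PosDef) :
    3 * traceNorm (A - B) ^ 2 ≤
      2 * ((trace A).re + 2 * (trace B).re) *
        (relEntropy A B - (trace A).re + (trace B).re) := by
  let a := hA.isHermitian.eigenvalues
  let b := hB.isHermitian.eigenvalues
  let κ : m × m → ℝ := fun p ↦
    a p.1 * Real.log (a p.1) - a p.1 * Real.log (b p.2) - a p.1 + b p.2
  let w : m × m → ℝ := fun p ↦ 2 / 3 * a p.1 + 4 / 3 * b p.2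
  have ha : ∀ i, 0 ≤ a i := hA.eigenvalues_nonneg
  have hb : ∀ j, 0 < b j := hB.eigenvalues_pos
  have hw : ∀ p, 0 < w p := fun p ↦
    add_pos_of_nonneg_of_pos (mul_nonneg (by norm_num) (ha p.1)) (mul_pos (by norm_num) (hb p.2))
  have hκw : ∀ p, (a p.1 - b p.2) ^ 2 ≤ κ p * w p := fun p ↦ by
    simp only [κ, w]
    linarith [three_mul_sub_sq_le_mul_log (ha p.1) (hb p.2)]
  have hκ : ∀ p, 0 ≤ κ p := fun p ↦
    nonneg_of_mul_nonneg_left ((sq_nonneg _).trans (hκw p)) (hw p)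
  obtain ⟨X, hX, hT⟩ := exists_unitary_traceNorm_sub_sq_le hA.isHermitian hB.isHermitian hκ
    (fun p ↦ (hw p).le) hκw
  rw [← relEntropy_sub_trace_add_trace_eq_sum,
    sum_norm_sq_eigenCoeff_mul_eigenvalues hA.isHermitian hB.isHermitian hX] at hT
  linarith

lemma re_trace_mul_le_of_trace_eq_zero {D M : Matrix m m ℂ} (hD : D.IsHermitian)
    (htrace : trace D = 0) {l u : ℝ}
    (hl : l • (1 : Matrix m m ℂ) ≤ M) (hu : M ≤ u • (1 : Matrix m m ℂ)) :
    (trace (D * M)).re ≤ (u - l) * (1 / 2 * traceNorm D) := by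
  have hnegPart := re_trace_mul_nonneg (nonneg_iff_posSemidef.1 (CFC.negPart_nonneg D))
    (le_iff.1 hl)
  have hposPart := re_trace_mul_nonneg (nonneg_iff_posSemidef.1 (CFC.posPart_nonneg D))
    (le_iff.1 hu)
  have hsub : trace (D⁺ - D⁻) = 0 := by
    rw [CFC.posPart_sub_negPart D hD.isSelfAdjoint, htrace]
  have hadd : trace (D⁺ + D⁻) = traceNorm D := by
    rw [CFC.posPart_add_negPart D hD.isSelfAdjoint, CFC.abs_eq_cfc_norm D hD.isSelfAdjoint,
      traceNorm_eq_trace_cfc_abs hD]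
    rfl
  have htr : (trace (D * M)).re = (trace (D⁺ * M)).re - (trace (D⁻ * M)).re := by
    rw [← Complex.sub_re, ← trace_sub, ← sub_mul, CFC.posPart_sub_negPart D hD.isSelfAdjoint]
  have hsub_re := congrArg Complex.re hsub
  have hadd_re := congrArg Complex.re hadd
  simp only [mul_sub, Matrix.mul_smul, mul_one, trace_sub, trace_add, trace_smul, Complex.sub_re,
    Complex.add_re, Complex.smul_re, smul_eq_mul, Complex.ofReal_re, Complex.zero_re]
    at hnegPart hposPart hsub_re hadd_re
  have hpos : (trace D⁺).re = 1 / 2 * traceNorm D := by linarith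
  have hneg : (trace D⁻).re = 1 / 2 * traceNorm D := by linarith
  rw [hneg] at hnegPart
  rw [hpos] at hposPart
  linarith

lemma matLog_smul (hA : A.PosDef) {c : ℝ} (hc : 0 < c) :
    matLog (c • A) = Real.log c • (1 : Matrix m m ℂ) + matLog A := by
  rw [matLog_eq_cfc, matLog_eq_cfc, ← Algebra.algebraMap_eq_smul_one]
  exact CFC.log_smul' A hc hA.isStrictlyPositive

lemma matLog_le_matLog (hA : A.PosDef) (hAB : A ≤ B) : matLog A ≤ matLog B := by
  rw [matLog_eq_cfc, matLog_eq_cfc]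
  exact CFC.log_le_log hAB hA.isStrictlyPositive

lemma continuousOn_matLog : ContinuousOn (matLog (m := m)) {A | A.PosDef} :=
  (CFC.continuousOn_log.mono fun _ hA ↦ ⟨hA.isHermitian.isSelfAdjoint, hA.isUnit⟩).congr
    fun A _ ↦ matLog_eq_cfc A

end Spectral

section ConvexCombination

variable {m : Type*} {ρ₁ ρ₂ : Matrix m m ℂ} {s t x : ℝ}

lemma lineMap_add_add {k V : Type*} [Ring k] [AddCommGroup V] [Module k V] (u v w : V) (c : k) :
    lineMap (u + w) (v + w) c = lineMap u v c + w := by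
  simp only [lineMap_apply, vsub_eq_sub, add_sub_add_right_eq_sub, vadd_eq_add, add_assoc]

lemma posDef_lineMap (h₁ : ρ₁.PosDef) (h₂ : ρ₂.PosDef) (ht : t ∈ Icc (0 : ℝ) 1) :
    (lineMap ρ₂ ρ₁ t).PosDef := by
  rcases ht.1.eq_or_lt with rfl | ht₀
  · rwa [lineMap_apply_zero]
  · rw [lineMap_apply_module]
    exact PosDef.posSemidef_add (h₂.posSemidef.smul (sub_nonneg.2 ht.2)) (h₁.smul ht₀)

variable [Fintype m]

lemma re_trace_lineMap (htr : trace ρ₁ = trace ρ₂) (t : ℝ) :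
    (trace (lineMap ρ₂ ρ₁ t)).re = (trace ρ₁).re := by
  rw [lineMap_apply_module, trace_add, trace_smul, trace_smul, ← htr, ← add_smul,
    sub_add_cancel, one_smul]

variable [DecidableEq m]

/-- The amount by which the entropy of the average of `ρ₁` (weight `x`) and `ρ₂` (weight `1 - x`)
exceeds the average of their entropies: the Holevo quantity of the ensemble. -/
noncomputable def concavityGap (ρ₁ ρ₂ : Matrix m m ℂ) (x : ℝ) : ℝ :=
  vnEntropy (lineMap ρ₂ ρ₁ x) - x * vnEntropy ρ₁ - (1 - x) * vnEntropy ρ₂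

lemma concavityGap_eq_relEntropy (ρ₁ ρ₂ : Matrix m m ℂ) (x : ℝ) :
    concavityGap ρ₁ ρ₂ x = x * relEntropy ρ₁ (lineMap ρ₂ ρ₁ x) +
      (1 - x) * relEntropy ρ₂ (lineMap ρ₂ ρ₁ x) := by
  have hmix : (trace (lineMap ρ₂ ρ₁ x * matLog (lineMap ρ₂ ρ₁ x))).re =
      x * (trace (ρ₁ * matLog (lineMap ρ₂ ρ₁ x))).re +
        (1 - x) * (trace (ρ₂ * matLog (lineMap ρ₂ ρ₁ x))).re := by
    nth_rw 1 [lineMap_apply_module]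
    rw [add_mul, smul_mul, smul_mul, trace_add, trace_smul, trace_smul, Complex.add_re,
      Complex.smul_re, Complex.smul_re, smul_eq_mul, smul_eq_mul, add_comm]
  simp only [concavityGap, vnEntropy, relEntropy, mul_sub, trace_sub, Complex.sub_re, hmix]
  ring

lemma traceNorm_sq_le_concavityGap_of_posDef (h₁ : ρ₁.PosDef) (h₂ : ρ₂.PosDef)
    (htr : trace ρ₁ = trace ρ₂) (hx : x ∈ Icc (0 : ℝ) 1) :
    1 / 2 * x * (1 - x) * traceNorm (ρ₁ - ρ₂) ^ 2 ≤ (trace ρ₁).re * concavityGap ρ₁ ρ₂ x := by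
  have hγ := posDef_lineMap h₁ h₂ hx
  have hD := h₁.isHermitian.sub h₂.isHermitian
  have hsub₁ : ρ₁ - lineMap ρ₂ ρ₁ x = (1 - x) • (ρ₁ - ρ₂) := by
    rw [lineMap_apply_module]; module
  have hsub₂ : ρ₂ - lineMap ρ₂ ρ₁ x = (-x) • (ρ₁ - ρ₂) := by
    rw [lineMap_apply_module]; module
  have hpinsker₁ := pinsker_inequality h₁.posSemidef hγ
  have hpinsker₂ := pinsker_inequality h₂.posSemidef hγ
  rw [hsub₁, traceNorm_smul hD, mul_pow, sq_abs, re_trace_lineMap htr] at hpinsker₁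
  rw [hsub₂, traceNorm_smul hD, mul_pow, sq_abs, re_trace_lineMap htr, ← htr] at hpinsker₂
  rw [concavityGap_eq_relEntropy]
  linarith [mul_le_mul_of_nonneg_left hpinsker₁ hx.1,
    mul_le_mul_of_nonneg_left hpinsker₂ (sub_nonneg.2 hx.2)]

lemma matLog_lineMap_sub_le (h₁ : ρ₁.PosDef) (h₂ : ρ₂.PosDef) (hs : 0 < s) (hst : s ≤ t)
    (ht : t < 1) :
    matLog (lineMap ρ₂ ρ₁ t) - matLog (lineMap ρ₂ ρ₁ s) ≤
      (Real.log t - Real.log s) • (1 : Matrix m m ℂ) := by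
  have hγs := posDef_lineMap h₁ h₂ ⟨hs.le, (hst.trans_lt ht).le⟩
  have hγt := posDef_lineMap h₁ h₂ ⟨(hs.trans_le hst).le, ht.le⟩
  have ht₀ := hs.trans_le hst
  have hdiff : (t / s) • lineMap ρ₂ ρ₁ s - lineMap ρ₂ ρ₁ t = (t / s - 1) • ρ₂ := by
    have hscale : t / s * s = t := div_mul_cancel₀ t hs.ne'
    simp only [lineMap_apply_module, smul_add, smul_smul, mul_sub, hscale]
    module
  have hle : lineMap ρ₂ ρ₁ t ≤ (t / s) • lineMap ρ₂ ρ₁ s := by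
    rw [le_iff, hdiff]
    exact h₂.posSemidef.smul (sub_nonneg.2 ((one_le_div hs).2 hst))
  rw [sub_le_iff_le_add, ← Real.log_div ht₀.ne' hs.ne', ← matLog_smul hγs (div_pos ht₀ hs)]
  exact matLog_le_matLog hγt hle

lemma le_matLog_lineMap_sub (h₁ : ρ₁.PosDef) (h₂ : ρ₂.PosDef) (hs : 0 < s) (hst : s ≤ t)
    (ht : t < 1) :
    (Real.log (1 - t) - Real.log (1 - s)) • (1 : Matrix m m ℂ) ≤
      matLog (lineMap ρ₂ ρ₁ t) - matLog (lineMap ρ₂ ρ₁ s) := by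
  have h := neg_le_neg (matLog_lineMap_sub_le h₂ h₁ (sub_pos.2 ht) (sub_le_sub_left hst 1)
    (sub_lt_self 1 hs))
  rwa [lineMap_apply_one_sub, lineMap_apply_one_sub, neg_sub, ← neg_smul, neg_sub] at h

/-- The derivative of `t ↦ S(t ρ₁ + (1 - t) ρ₂)` for states of equal trace, for which the identity
in `log + 1` contributes nothing. -/
noncomputable def entropySlope (ρ₁ ρ₂ : Matrix m m ℂ) (t : ℝ) : ℝ :=
  -(trace ((ρ₁ - ρ₂) * matLog (lineMap ρ₂ ρ₁ t))).re

lemma vnEntropy_lineMap_sub_le (h₁ : ρ₁.PosDef) (h₂ : ρ₂.PosDef)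
    (htr : trace ρ₁ = trace ρ₂) (hs : s ∈ Icc (0 : ℝ) 1) (ht : t ∈ Icc (0 : ℝ) 1) :
    vnEntropy (lineMap ρ₂ ρ₁ s) - vnEntropy (lineMap ρ₂ ρ₁ t) ≤
      entropySlope ρ₁ ρ₂ t * (s - t) := by
  have hklein := klein_inequality (posDef_lineMap h₁ h₂ hs).posSemidef (posDef_lineMap h₁ h₂ ht)
  rw [re_trace_lineMap htr, re_trace_lineMap htr, sub_self] at hklein
  have hmix : lineMap ρ₂ ρ₁ s = lineMap ρ₂ ρ₁ t + (s - t) • (ρ₁ - ρ₂) := by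
    simp only [lineMap_apply_module]
    module
  have hcross : (trace (lineMap ρ₂ ρ₁ s * matLog (lineMap ρ₂ ρ₁ t))).re =
      -vnEntropy (lineMap ρ₂ ρ₁ t) - (s - t) * entropySlope ρ₁ ρ₂ t := by
    rw [hmix, add_mul, smul_mul, trace_add, trace_smul, Complex.add_re, Complex.smul_re,
      smul_eq_mul, vnEntropy, entropySlope]
    ring
  rw [relEntropy, mul_sub, trace_sub, Complex.sub_re, hcross] at hklein
  rw [vnEntropy]
  linarith

lemma continuousOn_entropySlope (h₁ : ρ₁.PosDef) (h₂ : ρ₂.PosDef) :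
    ContinuousOn (entropySlope ρ₁ ρ₂) (Icc 0 1) := by
  have hlog : ContinuousOn (fun t : ℝ ↦ matLog (lineMap ρ₂ ρ₁ t)) (Icc 0 1) :=
    continuousOn_matLog.comp lineMap_continuous.continuousOn
      fun t ht ↦ posDef_lineMap h₁ h₂ ht
  have htrace : Continuous fun L : Matrix m m ℂ ↦ -(trace ((ρ₁ - ρ₂) * L)).re := by fun_prop
  exact htrace.comp_continuousOn hlog

lemma hasDerivAt_vnEntropy_lineMap (h₁ : ρ₁.PosDef) (h₂ : ρ₂.PosDef)
    (htr : trace ρ₁ = trace ρ₂) (ht : t ∈ Ioo (0 : ℝ) 1) :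
    HasDerivAt (fun t ↦ vnEntropy (lineMap ρ₂ ρ₁ t)) (entropySlope ρ₁ ρ₂ t) t := by
  have hnhds : Icc (0 : ℝ) 1 ∈ 𝓝 t := Icc_mem_nhds ht.1 ht.2
  refine hasDerivAt_of_supergradient ((continuousOn_entropySlope h₁ h₂).continuousAt hnhds) ?_
  filter_upwards [hnhds] with s hs
  exact ⟨vnEntropy_lineMap_sub_le h₁ h₂ htr hs (Ioo_subset_Icc_self ht),
    vnEntropy_lineMap_sub_le h₁ h₂ htr (Ioo_subset_Icc_self ht) hs⟩

lemma entropySlope_sub_le (h₁ : ρ₁.PosDef) (h₂ : ρ₂.PosDef)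
    (htr : trace ρ₁ = trace ρ₂) (hs : 0 < s) (hst : s ≤ t) (ht : t < 1) :
    entropySlope ρ₁ ρ₂ s - entropySlope ρ₁ ρ₂ t ≤
      ((Real.log (1 - s) - Real.log s) - (Real.log (1 - t) - Real.log t)) *
        (1 / 2 * traceNorm (ρ₁ - ρ₂)) := by
  have h := re_trace_mul_le_of_trace_eq_zero (h₁.isHermitian.sub h₂.isHermitian)
    (by rw [trace_sub, htr, sub_self]) (le_matLog_lineMap_sub h₁ h₂ hs hst ht)
    (matLog_lineMap_sub_le h₁ h₂ hs hst ht)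
  rw [mul_sub, trace_sub, Complex.sub_re] at h
  rw [entropySlope, entropySlope]
  linarith

lemma convexOn_vnEntropy_lineMap_sub_binEntropy (h₁ : ρ₁.PosDef) (h₂ : ρ₂.PosDef)
    (htr : trace ρ₁ = trace ρ₂) :
    ConvexOn ℝ (Icc 0 1) fun t ↦ vnEntropy (lineMap ρ₂ ρ₁ t) -
      Real.binEntropy t * (1 / 2 * traceNorm (ρ₁ - ρ₂)) := by
  have hderiv : ∀ t ∈ Ioo (0 : ℝ) 1, HasDerivAt (fun t ↦ vnEntropy (lineMap ρ₂ ρ₁ t) -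
      Real.binEntropy t * (1 / 2 * traceNorm (ρ₁ - ρ₂))) (entropySlope ρ₁ ρ₂ t -
        (Real.log (1 - t) - Real.log t) * (1 / 2 * traceNorm (ρ₁ - ρ₂))) t := fun t ht ↦
    (hasDerivAt_vnEntropy_lineMap h₁ h₂ htr ht).sub
      ((Real.hasDerivAt_binEntropy ht.1.ne' ht.2.ne).mul_const _)
  refine MonotoneOn.convexOn_of_deriv (convex_Icc 0 1) ?_ ?_ ?_
  · refine ContinuousOn.sub ?_ (by fun_prop)
    exact continuousOn_vnEntropy.comp lineMap_continuous.continuousOn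
      fun t ht ↦ (posDef_lineMap h₁ h₂ ht).isHermitian
  · rw [interior_Icc]
    exact fun t ht ↦ (hderiv t ht).differentiableAt.differentiableWithinAt
  · rw [interior_Icc]
    intro s hs t ht hst
    rw [(hderiv s hs).deriv, (hderiv t ht).deriv]
    linarith [entropySlope_sub_le h₁ h₂ htr hs.1 hst ht.2]

lemma concavityGap_le_of_posDef (h₁ : ρ₁.PosDef) (h₂ : ρ₂.PosDef)
    (htr : trace ρ₁ = trace ρ₂) (hx : x ∈ Icc (0 : ℝ) 1) :
    concavityGap ρ₁ ρ₂ x ≤ Real.binEntropy x * (1 / 2 * traceNorm (ρ₁ - ρ₂)) := by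
  have h := (convexOn_vnEntropy_lineMap_sub_binEntropy h₁ h₂ htr).2
    (right_mem_Icc.2 zero_le_one) (left_mem_Icc.2 zero_le_one) hx.1 (sub_nonneg.2 hx.2)
    (add_sub_cancel x 1)
  simp only [smul_eq_mul, mul_one, mul_zero, add_zero, lineMap_apply_one, lineMap_apply_zero,
    Real.binEntropy_one, Real.binEntropy_zero, zero_mul, sub_zero] at h
  rw [concavityGap]
  linarith

lemma tendsto_concavityGap_add_smul_one (h₁ : ρ₁.IsHermitian) (h₂ : ρ₂.IsHermitian) (x : ℝ) :
    Tendsto (fun ε : ℝ ↦ concavityGap (ρ₁ + ε • 1) (ρ₂ + ε • 1) x) (𝓝[>] 0)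
      (𝓝 (concavityGap ρ₁ ρ₂ x)) := by
  have hentropy : ∀ {ρ : Matrix m m ℂ}, ρ.IsHermitian →
      Tendsto (fun ε : ℝ ↦ vnEntropy (ρ + ε • 1)) (𝓝[>] 0) (𝓝 (vnEntropy ρ)) := fun {ρ} hρ ↦ by
    have hcont : Continuous fun ε : ℝ ↦ vnEntropy (ρ + ε • 1) :=
      continuousOn_vnEntropy.comp_continuous (by fun_prop)
        fun ε ↦ hρ.add (isHermitian_one.smul (IsSelfAdjoint.all ε))
    simpa only [zero_smul, add_zero] using (hcont.tendsto 0).mono_left nhdsWithin_le_nhds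
  have hmix : (lineMap ρ₂ ρ₁ x).IsHermitian := by
    rw [lineMap_apply_module]
    exact (h₂.smul (IsSelfAdjoint.all (1 - x))).add (h₁.smul (IsSelfAdjoint.all x))
  simp only [concavityGap, lineMap_add_add]
  exact ((hentropy hmix).sub ((hentropy h₁).const_mul x)).sub ((hentropy h₂).const_mul (1 - x))

theorem concavity_basic_bounds_general (h₁ : ρ₁.PosSemidef) (h₂ : ρ₂.PosSemidef)
    (htr : trace ρ₁ = trace ρ₂) (hx : x ∈ Icc (0 : ℝ) 1) :
    concavityGap ρ₁ ρ₂ x ≤ binEntropy x * (1 / 2 * traceNorm (ρ₁ - ρ₂)) ∧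
      1 / 2 * x * (1 - x) * traceNorm (ρ₁ - ρ₂) ^ 2 ≤
        (trace ρ₁).re * concavityGap ρ₁ ρ₂ x := by
  have hgap := tendsto_concavityGap_add_smul_one h₁.isHermitian h₂.isHermitian x
  have hposDef : ∀ {ρ : Matrix m m ℂ}, ρ.PosSemidef → ∀ {ε : ℝ}, 0 < ε → (ρ + ε • 1).PosDef :=
    fun hρ _ hε ↦ PosDef.posSemidef_add hρ (PosDef.one.smul hε)
  have htr' : ∀ ε : ℝ, trace (ρ₁ + ε • 1) = trace (ρ₂ + ε • 1) := fun ε ↦ by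
    rw [trace_add, trace_add, htr]
  have htrace : Tendsto (fun ε : ℝ ↦ (trace (ρ₁ + ε • 1)).re) (𝓝[>] 0) (𝓝 (trace ρ₁).re) := by
    have hcont : Continuous fun ε : ℝ ↦ (trace (ρ₁ + ε • 1)).re := by fun_prop
    simpa only [zero_smul, add_zero] using (hcont.tendsto 0).mono_left nhdsWithin_le_nhds
  constructor
  · refine le_of_tendsto hgap ?_
    filter_upwards [self_mem_nhdsWithin] with ε hε
    simpa only [add_sub_add_right_eq_sub, binEntropy_eq_real_binEntropy] using
      concavityGap_le_of_posDef (hposDef h₁ hε) (hposDef h₂ hε) (htr' ε) hx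
  · refine ge_of_tendsto (htrace.mul hgap) ?_
    filter_upwards [self_mem_nhdsWithin] with ε hε
    simpa only [add_sub_add_right_eq_sub] using
      traceNorm_sq_le_concavityGap_of_posDef (hposDef h₁ hε) (hposDef h₂ hε) (htr' ε) hx

end ConvexCombination

theorem concavity_basic_bounds (n : ℕ) (hn : 1 ≤ n) (x : ℝ) (hx : x ∈ Set.Ioo (0:ℝ) 1)
    (ρ₁ ρ₂ : Matrix (Fin n) (Fin n) ℂ) (h1 : IsDensity ρ₁) (h2 : IsDensity ρ₂) :
    binEntropy x * ((1 / 2) * traceNorm (ρ₁ - ρ₂))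
      ≥ vnEntropy (x • ρ₁ + (1 - x) • ρ₂) - x * vnEntropy ρ₁ - (1 - x) * vnEntropy ρ₂
    ∧ vnEntropy (x • ρ₁ + (1 - x) • ρ₂) - x * vnEntropy ρ₁ - (1 - x) * vnEntropy ρ₂
      ≥ (1 / 2) * x * (1 - x) * traceNorm (ρ₁ - ρ₂) ^ 2 := by
  simpa [concavityGap, lineMap_apply_module, add_comm, h1.2] using
    concavity_basic_bounds_general h1.1 h2.1 (h1.2.trans h2.2.symm) (Ioo_subset_Icc_self hx)
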